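/- Let L be a complete lattice in which every element is the supremum of a set of very weakly ⊤-compact elements. Then the infimum of the set of elements maximal below ⊤ equals the supremum of the set of all non-generators of L. -/

import Mathlib

def NonGenerator {L : Type*} [PartialOrder L] [OrderTop L] (a : L) : Prop :=
  ∀ e : L, (¬ ∃ p : L, p < ⊤ ∧ a ≤ p ∧ e ≤ p) → e = ⊤

def MaximalBelowTop {L : Type*} [PartialOrder L] [OrderTop L] (p : L) : Prop :=
  p < ⊤ ∧ ¬ ∃ q : L, p < q ∧ q < ⊤

def UnboundedBelowTopChain {L : Type*} [PartialOrder L] [OrderTop L] (C : Set L) : Prop :=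
  C.Nonempty ∧ IsChain (· ≤ ·) C ∧ (∀ c ∈ C, c < ⊤) ∧
    ¬ ∃ p : L, p < ⊤ ∧ ∀ c ∈ C, c ≤ p

def VeryWeaklyTopCompact {L : Type*} [PartialOrder L] [OrderTop L] (a : L) : Prop :=
  ∀ C : Set L, UnboundedBelowTopChain C →
    (∀ c ∈ C, ¬ ∃ p : L, MaximalBelowTop p ∧ c ≤ p) →
    ∃ c ∈ C, ∃ r : L, r < ⊤ ∧ c ≤ r ∧ a ≤ r

/-!
A non-generator `a` lies below every coatom `p`, since otherwise `a ∨ p = ⊤`, forcing `p = ⊤`.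
Conversely, let `a` be very weakly `⊤`-compact and below every coatom, and let `a ∨ e = ⊤` with
`e ≠ ⊤`. No element above `e` lies below a coatom, so by Zorn's lemma some chain above `e` is
unbounded below `⊤`; compactness of `a` gives an `r < ⊤` above both `a` and `e`, contradicting
`a ∨ e = ⊤`. So the infimum of the coatoms, a supremum of very weakly `⊤`-compact elements, is a
supremum of non-generators.
-/

section PartialOrder

variable {L : Type*} [PartialOrder L] [OrderTop L] {a e p : L}

theorem maximalBelowTop_iff_isCoatom : MaximalBelowTop p ↔ IsCoatom p := by
  simp only [← covBy_top_iff, MaximalBelowTop, CovBy, not_exists, not_and]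

theorem nonGenerator_iff_codisjoint : NonGenerator a ↔ ∀ e, Codisjoint a e → e = ⊤ := by
  have no_proper_upper_bound_iff (e : L) : (¬ ∃ p, p < ⊤ ∧ a ≤ p ∧ e ≤ p) ↔ Codisjoint a e := by
    simp only [Codisjoint, top_le_iff, lt_top_iff_ne_top]
    grind
  simp only [NonGenerator, no_proper_upper_bound_iff]

theorem NonGenerator.le_of_isCoatom (ha : NonGenerator a) (hp : IsCoatom p) : a ≤ p := by
  by_contra hap
  have hcodisjoint : Codisjoint a p := by
    intro q haq hpq
    obtain rfl | rfl := hp.le_iff.mp hpq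
    · exact le_rfl
    · exact absurd haq hap
  exact hp.ne_top (nonGenerator_iff_codisjoint.mp ha p hcodisjoint)

theorem exists_unboundedBelowTopChain_of_forall_isCoatom_not_le (he : e ≠ ⊤)
    (hcoatom : ∀ p, IsCoatom p → ¬ e ≤ p) :
    ∃ C ⊆ Set.Ici e, UnboundedBelowTopChain C := by
  by_contra! hbounded
  obtain ⟨m, hem, hm⟩ : ∃ m, e ≤ m ∧ Maximal (· ∈ Set.Ico e ⊤) m := by
    refine zorn_le_nonempty₀ _ (fun C hC hchain c hc => ?_) e ⟨le_rfl, he.lt_top⟩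
    by_contra! hub
    refine hbounded C (fun x hx => (hC hx).1) ⟨⟨c, hc⟩, hchain, fun x hx => (hC hx).2, ?_⟩
    rintro ⟨p, hp, hCp⟩
    obtain ⟨x, hx, hxp⟩ := hub p ⟨(hC hc).1.trans (hCp c hc), hp⟩
    exact hxp (hCp x hx)
  have hm_coatom : IsCoatom m := isCoatom_iff_ge_of_le.mpr
    ⟨hm.prop.2.ne, fun q hq hmq => hm.le_of_ge ⟨hem.trans hmq, hq.lt_top⟩ hmq⟩
  exact hcoatom m hm_coatom hem

theorem VeryWeaklyTopCompact.nonGenerator (ha : VeryWeaklyTopCompact a)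
    (hcoatom : ∀ p, IsCoatom p → a ≤ p) : NonGenerator a := by
  rw [nonGenerator_iff_codisjoint]
  intro e hcodisjoint
  by_contra he
  have not_le_coatom (p : L) (hp : IsCoatom p) : ¬ e ≤ p := fun hep =>
    hp.ne_top (top_le_iff.mp (hcodisjoint (hcoatom p hp) hep))
  obtain ⟨C, heC, hC⟩ := exists_unboundedBelowTopChain_of_forall_isCoatom_not_le he not_le_coatom
  obtain ⟨c, hc, r, hr, hcr, har⟩ := ha C hC <| by
    rintro c hc ⟨p, hp, hcp⟩
    exact not_le_coatom p (maximalBelowTop_iff_isCoatom.mp hp) ((heC hc).trans hcp)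
  exact hr.not_ge (hcodisjoint har ((heC hc).trans hcr))

theorem stmt_12_general {x : L} (hx : IsGLB {p : L | MaximalBelowTop p} x) {A : Set L}
    (hA : ∀ a ∈ A, VeryWeaklyTopCompact a) (hAx : IsLUB A x) :
    IsLUB {a : L | NonGenerator a} x := by
  simp only [maximalBelowTop_iff_isCoatom] at hx
  constructor
  · exact fun a ha => hx.2 fun p hp => NonGenerator.le_of_isCoatom ha hp
  · have hA_nonGenerator : A ⊆ {a | NonGenerator a} := fun a ha =>
      (hA a ha).nonGenerator fun p hp => (hAx.1 ha).trans (hx.1 hp)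
    exact fun b hb => hAx.2 fun a ha => hb (hA_nonGenerator ha)

end PartialOrder

theorem stmt_12 {L : Type*} [CompleteLattice L]
    (halg : ∀ x : L, ∃ A : Set L, (∀ a ∈ A, VeryWeaklyTopCompact a) ∧ x = sSup A) :
    sInf {p : L | MaximalBelowTop p} = sSup {x : L | NonGenerator x} := by
  obtain ⟨A, hA, hAx⟩ := halg (sInf {p : L | MaximalBelowTop p})
  exact (stmt_12_general (isGLB_sInf _) hA (hAx ▸ isLUB_sSup A)).sSup_eq.symm
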